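/- Let n ∈ ℕ, ε > 0, and let φ, φ̂ : ℝⁿ × ℝ → ℝ be twice continuously differentiable in x and continuously differentiable in t, with φ everywhere positive, satisfying the forward–backward heat system ∂φ/∂t = −εΔφ and ∂φ̂/∂t = εΔφ̂ at every (x,t). Then the product ρ(x,t) := φ(x,t)·φ̂(x,t) satisfies the controlled Fokker–Planck equation with the feedback control u = 2ε∇log φ: at every (x,t), ∂ρ/∂t + ∇·( ρ · 2ε∇(log φ) ) = εΔρ. -/

import Mathlib

open scoped BigOperators

/-- Partial derivative in the `i`-th coordinate direction of a scalar function on `ℝⁿ`. -/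
noncomputable def pd {n : ℕ} (i : Fin n) (f : EuclideanSpace ℝ (Fin n) → ℝ)
    (x : EuclideanSpace ℝ (Fin n)) : ℝ :=
  fderiv ℝ f x (EuclideanSpace.single i 1)

/-!
Since `φ ∇log φ = ∇φ`, the controlled flux is `ρ u = 2ε φ̂ ∇φ`, while
`ε ∇ρ = ε (φ ∇φ̂ + φ̂ ∇φ)`. The net flux `ε ∇ρ - ρ u` is therefore `ε (φ ∇φ̂ - φ̂ ∇φ)`. The mixed
terms `∇φ · ∇φ̂` cancel in its divergence, leaving `ε (φ Δφ̂ - φ̂ Δφ)`, which the two heat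
equations turn into `φ ∂φ̂/∂t + φ̂ ∂φ/∂t = ∂ρ/∂t`.
-/

section VectorCalculus

open scoped Topology

variable {n : ℕ}

/-- The divergence `∇·F` of a vector field on `ℝⁿ`, given by its components `F i`. -/
noncomputable def divergence (F : Fin n → EuclideanSpace ℝ (Fin n) → ℝ)
    (x : EuclideanSpace ℝ (Fin n)) : ℝ :=
  ∑ i, pd i (F i) x

/-- The Laplacian `Δf = ∇·∇f` of a scalar function on `ℝⁿ`, in terms of the partial
derivatives `pd`. -/
noncomputable def laplacian (f : EuclideanSpace ℝ (Fin n) → ℝ) :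
    EuclideanSpace ℝ (Fin n) → ℝ :=
  divergence fun i => pd i f

variable {f g : EuclideanSpace ℝ (Fin n) → ℝ} {F G : Fin n → EuclideanSpace ℝ (Fin n) → ℝ}
  {x : EuclideanSpace ℝ (Fin n)}

theorem pd_add (i : Fin n) (hf : DifferentiableAt ℝ f x) (hg : DifferentiableAt ℝ g x) :
    pd i (fun y => f y + g y) x = pd i f x + pd i g x := by
  simp [pd, fderiv_fun_add hf hg]

theorem pd_const_mul (i : Fin n) (c : ℝ) : pd i (fun y => c * f y) x = c * pd i f x := by
  change fderiv ℝ (c • f) x (EuclideanSpace.single i 1) = _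
  simp [fderiv_const_smul_field, pd]

theorem pd_mul (i : Fin n) (hf : DifferentiableAt ℝ f x) (hg : DifferentiableAt ℝ g x) :
    pd i (fun y => f y * g y) x = f x * pd i g x + g x * pd i f x := by
  simp [pd, fderiv_fun_mul hf hg]

theorem pd_log (i : Fin n) (hf : DifferentiableAt ℝ f x) (hfx : f x ≠ 0) :
    pd i (fun y => Real.log (f y)) x = (f x)⁻¹ * pd i f x := by
  simp [pd, fderiv.log hf hfx]

theorem differentiableAt_pd (i : Fin n) (hf : ContDiffAt ℝ 2 f x) :
    DifferentiableAt ℝ (pd i f) x :=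
  ((hf.fderiv_right (m := 1) (by norm_num)).differentiableAt one_ne_zero).clm_apply
    (differentiableAt_const _)

theorem divergence_congr (h : ∀ i, F i =ᶠ[𝓝 x] G i) : divergence F x = divergence G x :=
  Finset.sum_congr rfl fun i _ => by rw [pd, (h i).fderiv_eq, pd]

theorem divergence_add (hF : ∀ i, DifferentiableAt ℝ (F i) x)
    (hG : ∀ i, DifferentiableAt ℝ (G i) x) :
    divergence (fun i y => F i y + G i y) x = divergence F x + divergence G x := by
  simp only [divergence, pd_add _ (hF _) (hG _), Finset.sum_add_distrib]

theorem divergence_const_mul (c : ℝ) :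
    divergence (fun i y => c * F i y) x = c * divergence F x := by
  simp only [divergence, pd_const_mul, Finset.mul_sum]

theorem divergence_mul (hg : DifferentiableAt ℝ g x) (hF : ∀ i, DifferentiableAt ℝ (F i) x) :
    divergence (fun i y => g y * F i y) x = g x * divergence F x + ∑ i, F i x * pd i g x := by
  simp only [divergence, pd_mul _ hg (hF _), Finset.sum_add_distrib, Finset.mul_sum]

theorem divergence_mul_grad (hg : DifferentiableAt ℝ g x) (hf : ContDiffAt ℝ 2 f x) :
    divergence (fun i y => g y * pd i f y) x = g x * laplacian f x + ∑ i, pd i f x * pd i g x :=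
  divergence_mul hg fun i => differentiableAt_pd i hf

theorem laplacian_mul (hf : ContDiffAt ℝ 2 f x) (hg : ContDiffAt ℝ 2 g x) :
    laplacian (fun y => f y * g y) x =
      f x * laplacian g x + g x * laplacian f x + 2 * ∑ i, pd i f x * pd i g x := by
  have hf' := hf.differentiableAt two_ne_zero
  have hg' := hg.differentiableAt two_ne_zero
  have grad_mul (i : Fin n) :
      pd i (fun y => f y * g y) =ᶠ[𝓝 x] fun y => f y * pd i g y + g y * pd i f y := by
    filter_upwards [hf.eventually (by simp), hg.eventually (by simp)] with y hfy hgy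
    exact pd_mul i (hfy.differentiableAt two_ne_zero) (hgy.differentiableAt two_ne_zero)
  calc laplacian (fun y => f y * g y) x
      = divergence (fun i y => f y * pd i g y + g y * pd i f y) x := divergence_congr grad_mul
    _ = divergence (fun i y => f y * pd i g y) x + divergence (fun i y => g y * pd i f y) x :=
        divergence_add (fun i => hf'.fun_mul (differentiableAt_pd i hg))
          (fun i => hg'.fun_mul (differentiableAt_pd i hf))
    _ = f x * laplacian g x + g x * laplacian f x + 2 * ∑ i, pd i f x * pd i g x := by
        simp only [divergence_mul_grad hf' hg, divergence_mul_grad hg' hf, mul_comm (pd _ g x)]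
        ring

theorem divergence_mul_grad_log (c : ℝ) (hf : ContDiffAt ℝ 2 f x) (hfx : f x ≠ 0)
    (hg : DifferentiableAt ℝ g x) :
    divergence (fun i y => f y * g y * (c * pd i (fun z => Real.log (f z)) y)) x =
      c * (g x * laplacian f x + ∑ i, pd i f x * pd i g x) := by
  have flux_eq (i : Fin n) : (fun y => f y * g y * (c * pd i (fun z => Real.log (f z)) y))
      =ᶠ[𝓝 x] fun y => c * (g y * pd i f y) := by
    filter_upwards [hf.eventually (by simp), hf.continuousAt.eventually_ne hfx] with y hfy hy
    rw [pd_log i (hfy.differentiableAt two_ne_zero) hy]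
    field_simp
  rw [divergence_congr flux_eq, divergence_const_mul, divergence_mul_grad hg hf]

end VectorCalculus

theorem product_of_schrodinger_factors_solves_controlled_fpk_general
    {n : ℕ} {ε : ℝ} {φ φhat : EuclideanSpace ℝ (Fin n) → ℝ → ℝ}
    {x : EuclideanSpace ℝ (Fin n)} {t : ℝ} (hpos : 0 < φ x t)
    (hφx : ContDiffAt ℝ 2 (fun y => φ y t) x) (hφt : DifferentiableAt ℝ (φ x) t)
    (hφhatx : ContDiffAt ℝ 2 (fun y => φhat y t) x) (hφhatt : DifferentiableAt ℝ (φhat x) t)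
    (hbackward : deriv (φ x) t = -ε * laplacian (fun y => φ y t) x)
    (hforward : deriv (φhat x) t = ε * laplacian (fun y => φhat y t) x) :
    deriv (fun τ => φ x τ * φhat x τ) t
        + divergence (fun i y => φ y t * φhat y t *
            (2 * ε * pd i (fun z => Real.log (φ z t)) y)) x
      = ε * laplacian (fun y => φ y t * φhat y t) x := by
  rw [deriv_fun_mul hφt hφhatt, hbackward, hforward, laplacian_mul hφx hφhatx,
    divergence_mul_grad_log (2 * ε) hφx hpos.ne' (hφhatx.differentiableAt two_ne_zero)]
  ring

/-- if `φ` and `φ̂` solve the forward–backward heat system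
`∂φ/∂t = −εΔφ`, `∂φ̂/∂t = εΔφ̂` with `φ > 0`, then `ρ = φ·φ̂` satisfies the
controlled Fokker–Planck equation with feedback control `u = 2ε∇ log φ`:
`∂ρ/∂t + ∇·(ρ·2ε∇ log φ) = εΔρ`. -/
theorem product_of_schrodinger_factors_solves_controlled_fpk
    (n : ℕ) (ε : ℝ) (hε : 0 < ε)
    (φ φhat : EuclideanSpace ℝ (Fin n) → ℝ → ℝ)
    (hpos : ∀ x t, 0 < φ x t)
    (hφx : ∀ t, ContDiff ℝ 2 fun x => φ x t)
    (hφt : ∀ x, ContDiff ℝ 1 fun t => φ x t)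
    (hφhatx : ∀ t, ContDiff ℝ 2 fun x => φhat x t)
    (hφhatt : ∀ x, ContDiff ℝ 1 fun t => φhat x t)
    (hbackward : ∀ (x : EuclideanSpace ℝ (Fin n)) (t : ℝ),
      deriv (fun τ => φ x τ) t
        = -ε * ∑ i, pd i (fun y => pd i (fun z => φ z t) y) x)
    (hforward : ∀ (x : EuclideanSpace ℝ (Fin n)) (t : ℝ),
      deriv (fun τ => φhat x τ) t
        = ε * ∑ i, pd i (fun y => pd i (fun z => φhat z t) y) x)
    (ρ : EuclideanSpace ℝ (Fin n) → ℝ → ℝ)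
    (hρ : ∀ x t, ρ x t = φ x t * φhat x t) :
    ∀ (x : EuclideanSpace ℝ (Fin n)) (t : ℝ),
      deriv (fun τ => ρ x τ) t
        + (∑ i, pd i (fun y => ρ y t *
            (2 * ε * pd i (fun z => Real.log (φ z t)) y)) x)
        = ε * ∑ i, pd i (fun y => pd i (fun z => ρ z t) y) x := by
  intro x t
  obtain rfl : ρ = fun x t => φ x t * φhat x t := funext₂ hρ
  exact product_of_schrodinger_factors_solves_controlled_fpk_general (hpos x t)
    (hφx t).contDiffAt ((hφt x).differentiable one_ne_zero t)
    (hφhatx t).contDiffAt ((hφhatt x).differentiable one_ne_zero t)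
    (hbackward x t) (hforward x t)
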